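/- arXiv:1003.1874 — 3 statements merged into one kernel-verified Lean document; each statement's English description precedes it below -/
import Mathlib

section
/- Von Neumann entropy inequality for separable states: let ρ_i^A be n×n density matrices, ρ_i^B be m×m density matrices (i in a finite index set), and p_i ≥ 0 with Σ p_i = 1. Let ρ = Σ_i p_i (ρ_i^A ⊗ ρ_i^B) (Kronecker products), and let ρ^A = Σ_i p_i ρ_i^A and ρ^B = Σ_i p_i ρ_i^B be its reduced density matrices. Then S(ρ) ≥ S(ρ^A) and S(ρ) ≥ S(ρ^B). -/
open Matrix Kronecker
open scoped ComplexOrder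

noncomputable section

/-- The von Neumann entropy `S(σ) = −Σ λᵢ ln λᵢ` of a Hermitian matrix, computed from its
eigenvalues (with the convention `0·ln 0 = 0`, automatic since `Real.log 0 = 0`);
set to `0` on non-Hermitian matrices. -/
def vN {n : Type*} [Fintype n] [DecidableEq n] (σ : Matrix n n ℂ) : ℝ :=
  @dite _ σ.IsHermitian (Classical.dec _)
    (fun h => -∑ i, h.eigenvalues i * Real.log (h.eigenvalues i)) (fun _ => 0)

/-- A density matrix: Hermitian positive-semidefinite with trace 1. -/
def IsDensity {n : Type*} [Fintype n] (σ : Matrix n n ℂ) : Prop :=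
  σ.PosSemidef ∧ σ.trace = 1

/-!
Let `σ` be the partial trace of a positive semidefinite matrix `ρ` over the second factor. If
`ρ ≤ σ ⊗ 1` (the reduction criterion), then operator monotonicity of the logarithm gives
`tr (ρ log ρ) ≤ tr (ρ log (σ ⊗ 1)) = tr (ρ (log σ ⊗ 1)) = tr (σ log σ)`, that is `S(σ) ≤ S(ρ)`.
A product `A ⊗ B` of positive semidefinite matrices satisfies the criterion because `B ≤ tr B • 1`,
and the criterion is preserved by sums. Singular matrices are handled by replacing `log x` with
`log (x + ε)` and letting `ε` tend to `0`.
-/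

open Filter
open scoped MatrixOrder Matrix.Norms.L2Operator Topology

section FunctionalCalculus

lemma cfc_log_add_le_cfc_log_add {A : Type*} [CStarAlgebra A] [PartialOrder A] [StarOrderedRing A]
    {a b : A} (ha : 0 ≤ a) (hab : a ≤ b) {ε : ℝ} (hε : 0 < ε) :
    cfc (fun x => Real.log (x + ε)) a ≤ cfc (fun x => Real.log (x + ε)) b := by
  have cfc_log_add {c : A} (hc : 0 ≤ c) :
      cfc (fun x => Real.log (x + ε)) c = CFC.log (c + algebraMap ℝ A ε) := by
    have hlog : ContinuousOn Real.log ((· + ε) '' spectrum ℝ c) := by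
      refine Real.continuousOn_log.mono ?_
      rintro _ ⟨x, hx, rfl⟩
      exact (add_pos_of_nonneg_of_pos (spectrum_nonneg_of_nonneg hc hx) hε).ne'
    rw [CFC.log, cfc_comp' Real.log (· + ε) c, cfc_add_const ε (fun x => x) c, cfc_id' ℝ c]
  rw [cfc_log_add ha, cfc_log_add (ha.trans hab)]
  exact CFC.log_le_log (by gcongr) ((isStrictlyPositive_algebraMap hε).nonneg_add ha)

variable {𝕜 n : Type*} [RCLike 𝕜] [Fintype n] [DecidableEq n]

lemma continuousOn_spectrum_real (A : Matrix n n 𝕜) (f : ℝ → ℝ) :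
    ContinuousOn f (spectrum ℝ A) :=
  finite_real_spectrum.continuousOn f

lemma trace_cfc {A : Matrix n n 𝕜} (hA : A.IsHermitian) (f : ℝ → ℝ) :
    (cfc f A).trace = ∑ i, (f (hA.eigenvalues i) : 𝕜) := by
  rw [hA.cfc_eq, IsHermitian.cfc, Unitary.conjStarAlgAut_apply, trace_mul_cycle,
    Unitary.coe_star_mul_self, one_mul, trace_diagonal]
  rfl

lemma trace_mul_cfc {A : Matrix n n 𝕜} (hA : A.IsHermitian) (f : ℝ → ℝ) :
    (A * cfc f A).trace = ∑ i, ((hA.eigenvalues i * f (hA.eigenvalues i) : ℝ) : 𝕜) := by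
  rw [← trace_cfc hA fun x => x * f x,
    cfc_mul (fun x => x) f A (continuousOn_spectrum_real A _) (continuousOn_spectrum_real A _),
    cfc_id' ℝ A hA.isSelfAdjoint]

end FunctionalCalculus

section Order

variable {𝕜 n m : Type*} [RCLike 𝕜]

lemma kronecker_le_kronecker_of_posSemidef_left [Finite n] [Finite m] {A : Matrix n n 𝕜}
    {B C : Matrix m m 𝕜} (hA : A.PosSemidef) (hBC : B ≤ C) : A ⊗ₖ B ≤ A ⊗ₖ C := by
  cases nonempty_fintype n
  cases nonempty_fintype m
  have hsub : A ⊗ₖ C - A ⊗ₖ B = A ⊗ₖ (C - B) := by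
    rw [sub_eq_iff_eq_add, ← kronecker_add, sub_add_cancel]
  rw [le_iff, hsub]
  exact hA.kronecker (le_iff.mp hBC)

variable [Fintype n]

lemma trace_mul_nonneg {A B : Matrix n n 𝕜} (hA : A.PosSemidef) (hB : B.PosSemidef) :
    0 ≤ (A * B).trace := by
  classical
  obtain ⟨X, rfl⟩ := CStarAlgebra.nonneg_iff_eq_star_mul_self.mp hA.nonneg
  rw [star_eq_conjTranspose, mul_assoc, trace_mul_comm]
  exact (hB.mul_mul_conjTranspose_same X).trace_nonneg

lemma trace_mul_le_trace_mul_of_posSemidef_left {A B C : Matrix n n 𝕜} (hA : A.PosSemidef)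
    (hBC : B ≤ C) : (A * B).trace ≤ (A * C).trace := by
  rw [← sub_nonneg, ← trace_sub, ← mul_sub]
  exact trace_mul_nonneg hA (le_iff.mp hBC)

lemma le_trace_smul_one [DecidableEq n] {A : Matrix n n 𝕜} (hA : A.PosSemidef) :
    A ≤ A.trace • 1 := by
  have htrace : A.trace • (1 : Matrix n n 𝕜) = algebraMap ℝ _ (∑ i, hA.1.eigenvalues i) := by
    rw [hA.1.trace_eq_sum_eigenvalues, Algebra.algebraMap_eq_smul_one, ← RCLike.ofReal_sum,
      RCLike.real_smul_eq_coe_smul (K := 𝕜)]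
  rw [htrace, le_algebraMap_iff_spectrum_le hA.1.isSelfAdjoint,
    hA.1.spectrum_real_eq_range_eigenvalues]
  rintro _ ⟨i, rfl⟩
  exact Finset.single_le_sum (fun j _ => hA.eigenvalues_nonneg j) (Finset.mem_univ i)

end Order

section PartialTrace

variable {R n m : Type*} [Fintype m]

/-- The partial trace over the second tensor factor, which sends a state of a bipartite system to
its reduced state on the first factor. It is the sum of the diagonal blocks of the matrix, one for
each basis vector of the second factor. -/
def partialTrace [Semiring R] : Matrix (n × m) (n × m) R →ₗ[R] Matrix n n R where
  toFun ρ := ∑ k, ρ.submatrix (·, k) (·, k)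
  map_add' ρ τ := by simp only [submatrix_add, Pi.add_apply, Finset.sum_add_distrib]
  map_smul' c ρ := by simp only [submatrix_smul, Pi.smul_apply, Finset.smul_sum, RingHom.id_apply]

lemma partialTrace_apply [Semiring R] (ρ : Matrix (n × m) (n × m) R) (i j : n) :
    partialTrace ρ i j = ∑ k, ρ (i, k) (j, k) :=
  Matrix.sum_apply i j _ _

lemma partialTrace_kronecker [CommSemiring R] (A : Matrix n n R) (B : Matrix m m R) :
    partialTrace (A ⊗ₖ B) = B.trace • A := by
  ext i j
  simp only [partialTrace_apply, kronecker_apply, ← Finset.mul_sum, Matrix.smul_apply, smul_eq_mul,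
    trace, diag_apply, mul_comm]

lemma posSemidef_partialTrace [Ring R] [PartialOrder R] [StarRing R] [AddLeftMono R]
    {ρ : Matrix (n × m) (n × m) R} (hρ : ρ.PosSemidef) : (partialTrace ρ).PosSemidef :=
  posSemidef_sum _ fun _ _ => hρ.submatrix _

variable [DecidableEq m]

lemma kronecker_le_partialTrace_kronecker_one {𝕜 : Type*} [RCLike 𝕜] [Finite n]
    {A : Matrix n n 𝕜} {B : Matrix m m 𝕜} (hA : A.PosSemidef) (hB : B.PosSemidef) :
    A ⊗ₖ B ≤ partialTrace (A ⊗ₖ B) ⊗ₖ 1 := by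
  rw [partialTrace_kronecker, smul_kronecker, ← kronecker_smul]
  exact kronecker_le_kronecker_of_posSemidef_left hA (le_trace_smul_one hB)

variable [Fintype n]

lemma trace_mul_kronecker_one [CommSemiring R] (ρ : Matrix (n × m) (n × m) R)
    (X : Matrix n n R) : (ρ * (X ⊗ₖ 1)).trace = (partialTrace ρ * X).trace := by
  simp only [trace, diag_apply, mul_apply, kronecker_apply, one_apply, partialTrace_apply,
    Fintype.sum_prod_type, mul_ite, mul_one, mul_zero, Finset.sum_ite_eq', Finset.mem_univ,
    if_true, Finset.sum_mul]
  exact Finset.sum_congr rfl fun _ _ => Finset.sum_comm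

variable [DecidableEq n]

/-- The embedding `X ↦ X ⊗ 1` of the operators on the first tensor factor, as a homomorphism of
star algebras, so that it commutes with the functional calculus. -/
def kroneckerOne [CommSemiring R] [StarRing R] :
    Matrix n n R →⋆ₐ[R] Matrix (n × m) (n × m) R where
  toFun X := X ⊗ₖ 1
  map_one' := one_kronecker_one
  map_mul' X Y := by rw [← mul_kronecker_mul, one_mul]
  map_zero' := zero_kronecker _
  map_add' X Y := add_kronecker _ _ _
  commutes' r := by
    simp only [Algebra.algebraMap_eq_smul_one, smul_kronecker, one_kronecker_one]
  map_star' X := by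
    simp only [star_eq_conjTranspose, conjTranspose_kronecker, conjTranspose_one]

lemma kroneckerOne_apply [CommSemiring R] [StarRing R] (X : Matrix n n R) :
    kroneckerOne X = X ⊗ₖ (1 : Matrix m m R) := rfl

lemma cfc_kronecker_one {𝕜 : Type*} [RCLike 𝕜] {A : Matrix n n 𝕜} (hA : A.IsHermitian)
    (f : ℝ → ℝ) : cfc f (A ⊗ₖ (1 : Matrix m m 𝕜)) = cfc f A ⊗ₖ 1 := by
  let φ : Matrix n n 𝕜 →⋆ₐ[𝕜] Matrix (n × m) (n × m) 𝕜 := kroneckerOne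
  have hφ : Continuous φ := φ.toAlgHom.toLinearMap.continuous_of_finiteDimensional
  exact (φ.map_cfc f A (continuousOn_spectrum_real A f) hφ hA.isSelfAdjoint
    (hA.isSelfAdjoint.map φ)).symm

end PartialTrace

section Entropy

variable {n m : Type*} [Fintype n] [DecidableEq n] [Fintype m] [DecidableEq m]

lemma vN_eq_neg_sum {σ : Matrix n n ℂ} (hσ : σ.IsHermitian) :
    vN σ = -∑ i, hσ.eigenvalues i * Real.log (hσ.eigenvalues i) :=
  dif_pos hσ

lemma vN_eq_sum_roots_charpoly {σ : Matrix n n ℂ} (hσ : σ.IsHermitian) :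
    vN σ = (σ.charpoly.roots.map fun z => Real.negMulLog z.re).sum := by
  simp [vN_eq_neg_sum hσ, hσ.roots_charpoly_eq_eigenvalues, Real.negMulLog]

lemma vN_submatrix_equiv {σ : Matrix n n ℂ} (hσ : σ.IsHermitian) (e : m ≃ n) :
    vN (σ.submatrix e e) = vN σ := by
  rw [vN_eq_sum_roots_charpoly hσ, vN_eq_sum_roots_charpoly (hσ.submatrix e),
    ← charpoly_reindex e.symm σ]
  rfl

lemma tendsto_mul_log_add (x : ℝ) :
    Tendsto (fun ε => x * Real.log (x + ε)) (𝓝[>] 0) (𝓝 (x * Real.log x)) := by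
  rcases eq_or_ne x 0 with rfl | hx
  · simp
  · have hcont : ContinuousAt (fun ε => x * Real.log (x + ε)) 0 :=
      continuousAt_const.mul ((continuousAt_const.add continuousAt_id).log (by simpa using hx))
    simpa using hcont.tendsto.mono_left nhdsWithin_le_nhds

lemma tendsto_trace_mul_cfc_log_add {σ : Matrix n n ℂ} (hσ : σ.IsHermitian) :
    Tendsto (fun ε => (σ * cfc (fun x => Real.log (x + ε)) σ).trace.re) (𝓝[>] 0) (𝓝 (-vN σ)) := by
  simp only [vN_eq_neg_sum hσ, neg_neg, trace_mul_cfc hσ, Complex.re_sum]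
  exact tendsto_finsetSum _ fun i _ => tendsto_mul_log_add (hσ.eigenvalues i)

theorem vN_partialTrace_le_of_le_kronecker_one {ρ : Matrix (n × m) (n × m) ℂ}
    (hρ : ρ.PosSemidef) (hle : ρ ≤ partialTrace ρ ⊗ₖ 1) : vN (partialTrace ρ) ≤ vN ρ := by
  have hσ := (posSemidef_partialTrace hρ).isHermitian
  refine neg_le_neg_iff.mp (le_of_tendsto_of_tendsto (tendsto_trace_mul_cfc_log_add hρ.isHermitian)
    (tendsto_trace_mul_cfc_log_add hσ) ?_)
  filter_upwards [self_mem_nhdsWithin] with ε hε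
  set f : ℝ → ℝ := fun x => Real.log (x + ε)
  have hlog : cfc f ρ ≤ cfc f (partialTrace ρ ⊗ₖ 1) := cfc_log_add_le_cfc_log_add hρ.nonneg hle hε
  calc (ρ * cfc f ρ).trace.re
      ≤ (ρ * cfc f (partialTrace ρ ⊗ₖ 1)).trace.re :=
        Complex.re_le_re (trace_mul_le_trace_mul_of_posSemidef_left hρ hlog)
    _ = (partialTrace ρ * cfc f (partialTrace ρ)).trace.re := by
        rw [cfc_kronecker_one hσ, trace_mul_kronecker_one]

theorem vN_sum_trace_smul_le_vN_sum_kronecker {ι : Type*} (s : Finset ι)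
    {A : ι → Matrix n n ℂ} {B : ι → Matrix m m ℂ}
    (hA : ∀ i ∈ s, (A i).PosSemidef) (hB : ∀ i ∈ s, (B i).PosSemidef) :
    vN (∑ i ∈ s, (B i).trace • A i) ≤ vN (∑ i ∈ s, A i ⊗ₖ B i) := by
  have hpartial : ∑ i ∈ s, (B i).trace • A i = partialTrace (∑ i ∈ s, A i ⊗ₖ B i) := by
    simp only [map_sum, partialTrace_kronecker]
  rw [hpartial]
  refine vN_partialTrace_le_of_le_kronecker_one
    (posSemidef_sum s fun i hi => (hA i hi).kronecker (hB i hi)) ?_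
  rw [← kroneckerOne_apply, map_sum, map_sum]
  exact Finset.sum_le_sum fun i hi => kronecker_le_partialTrace_kronecker_one (hA i hi) (hB i hi)

theorem stmt9_general {ι : Type*} (s : Finset ι)
    {A : ι → Matrix n n ℂ} {B : ι → Matrix m m ℂ}
    (hA : ∀ i ∈ s, (A i).PosSemidef) (hB : ∀ i ∈ s, (B i).PosSemidef) :
    vN (∑ i ∈ s, (B i).trace • A i) ≤ vN (∑ i ∈ s, A i ⊗ₖ B i) ∧
      vN (∑ i ∈ s, (A i).trace • B i) ≤ vN (∑ i ∈ s, A i ⊗ₖ B i) := by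
  have hherm : (∑ i ∈ s, A i ⊗ₖ B i).IsHermitian :=
    (posSemidef_sum s fun i hi => (hA i hi).kronecker (hB i hi)).isHermitian
  have hswap : (∑ i ∈ s, A i ⊗ₖ B i).submatrix (Equiv.prodComm m n) (Equiv.prodComm m n) =
      ∑ i ∈ s, B i ⊗ₖ A i := by
    ext ⟨a, b⟩ ⟨c, d⟩
    simp [Matrix.sum_apply, mul_comm]
  refine ⟨vN_sum_trace_smul_le_vN_sum_kronecker s hA hB, ?_⟩
  rw [← vN_submatrix_equiv hherm (Equiv.prodComm m n), hswap]
  exact vN_sum_trace_smul_le_vN_sum_kronecker s hB hA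

end Entropy

/-- for a separable state `ρ = Σᵢ pᵢ ρᵢ^A ⊗ ρᵢ^B` with reduced density matrices
`ρ^A = Σᵢ pᵢ ρᵢ^A` and `ρ^B = Σᵢ pᵢ ρᵢ^B`, the von Neumann entropy satisfies
`S(ρ) ≥ S(ρ^A)` and `S(ρ) ≥ S(ρ^B)`. -/
theorem stmt9 (n m k : ℕ)
    (ρA : Fin k → Matrix (Fin n) (Fin n) ℂ) (ρB : Fin k → Matrix (Fin m) (Fin m) ℂ)
    (p : Fin k → ℝ)
    (hA : ∀ i, IsDensity (ρA i)) (hB : ∀ i, IsDensity (ρB i))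
    (hp : ∀ i, 0 ≤ p i) (hps : ∑ i, p i = 1) :
    vN (∑ i, (p i : ℂ) • ρA i) ≤ vN (∑ i, (p i : ℂ) • (ρA i ⊗ₖ ρB i)) ∧
      vN (∑ i, (p i : ℂ) • ρB i) ≤ vN (∑ i, (p i : ℂ) • (ρA i ⊗ₖ ρB i)) := by
  have hpA : ∀ i ∈ Finset.univ, ((p i : ℂ) • ρA i).PosSemidef := fun i _ =>
    (hA i).1.smul (by exact_mod_cast hp i)
  simpa only [trace_smul, (hA _).2, (hB _).2, smul_kronecker, smul_eq_mul, mul_one, one_smul]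
    using stmt9_general Finset.univ hpA fun i _ => (hB i).1
end
end

section
/- Schmidt decomposition theorem: for every coefficient matrix c : Matrix (Fin n) (Fin m) ℂ with Σ_{i,j} |c_{ij}|² = 1 there exist a natural number k with k ≤ min(n, m), nonnegative reals p : Fin k → ℝ with Σ_l p_l = 1, and orthonormal families u : Fin k → (Fin n → ℂ) and v : Fin k → (Fin m → ℂ) (orthonormal with respect to the standard Hermitian inner products), such that c_{ij} = Σ_{l} √(p_l) · u_l(i) · v_l(j) for all i, j. -/
open Matrix

/-!
The Schmidt decomposition is the singular value decomposition of the coefficient matrix, read as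
an operator `T` between Euclidean spaces. An orthonormal eigenbasis `v` of `T* T` has orthogonal
images, `⟪T v_i, T v_j⟫ = σ_i² δ_ij`, so `u_i = T v_i / σ_i` is orthonormal over the nonzero `σ_i`,
of which there are `rank T`, and expanding `x` in the basis `v` gives `T x = ∑ σ_i ⟪v_i, x⟫ u_i`.
At `x = e_j` the factor `⟪v_i, e_j⟫` is the conjugate of the `j`-th entry of `v_i`, so the second
Schmidt family consists of the conjugated `v_i`. The weights are `p_i = σ_i²`; their sum is
`tr (T* T)`, the squared Frobenius norm.
-/

open Module

section SingularVectors

variable {𝕜 E F : Type*} [RCLike 𝕜]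
  [NormedAddCommGroup E] [InnerProductSpace 𝕜 E] [FiniteDimensional 𝕜 E]
  [NormedAddCommGroup F] [InnerProductSpace 𝕜 F] [FiniteDimensional 𝕜 F]
  (T : E →ₗ[𝕜] F)

/-- The right singular vectors of `T`: an orthonormal basis of eigenvectors of `T* T`, the `i`-th
one belonging to the eigenvalue `T.singularValues i ^ 2`. -/
noncomputable def rightSingularBasis : OrthonormalBasis (Fin (finrank 𝕜 E)) 𝕜 E :=
  T.isSymmetric_adjoint_comp_self.eigenvectorBasis rfl

/-- The left singular vectors of `T`: the normalized images of the right singular vectors.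
The vector is `0` where the singular value vanishes. -/
noncomputable def leftSingularVector (i : Fin (finrank 𝕜 E)) : F :=
  (T.singularValues i : 𝕜)⁻¹ • T (rightSingularBasis T i)

lemma adjoint_apply_rightSingularBasis (i : Fin (finrank 𝕜 E)) :
    T.adjoint (T (rightSingularBasis T i)) =
      (T.singularValues i : 𝕜) ^ 2 • rightSingularBasis T i := by
  rw [← RCLike.ofReal_pow, T.sq_singularValues_fin rfl]
  exact T.isSymmetric_adjoint_comp_self.apply_eigenvectorBasis rfl i

lemma inner_apply_rightSingularBasis (i j : Fin (finrank 𝕜 E)) :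
    inner 𝕜 (T (rightSingularBasis T i)) (T (rightSingularBasis T j)) =
      if i = j then (T.singularValues i : 𝕜) ^ 2 else 0 := by
  rw [← LinearMap.adjoint_inner_right, adjoint_apply_rightSingularBasis, inner_smul_right,
    orthonormal_iff_ite.1 (rightSingularBasis T).orthonormal, mul_ite, mul_one, mul_zero]
  split_ifs with h
  · rw [h]
  · rfl

lemma norm_apply_rightSingularBasis (i : Fin (finrank 𝕜 E)) :
    ‖T (rightSingularBasis T i)‖ = T.singularValues i := by
  rw [← sq_eq_sq₀ (norm_nonneg _) (T.singularValues_nonneg i), ← RCLike.ofReal_inj (K := 𝕜),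
    RCLike.ofReal_pow, ← inner_self_eq_norm_sq_to_K, inner_apply_rightSingularBasis, if_pos rfl,
    RCLike.ofReal_pow]

lemma singularValues_smul_leftSingularVector (i : Fin (finrank 𝕜 E)) :
    (T.singularValues i : 𝕜) • leftSingularVector T i = T (rightSingularBasis T i) := by
  by_cases h : T.singularValues i = 0
  · have hT : T (rightSingularBasis T i) = 0 :=
      norm_eq_zero.1 ((norm_apply_rightSingularBasis T i).trans h)
    rw [h, RCLike.ofReal_zero, zero_smul, hT]
  · exact smul_inv_smul₀ (RCLike.ofReal_ne_zero.2 h) _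

lemma orthonormal_leftSingularVector_comp {ι : Type*} {e : ι → Fin (finrank 𝕜 E)}
    (he : e.Injective) (hpos : ∀ l, 0 < T.singularValues (e l)) :
    Orthonormal 𝕜 (leftSingularVector T ∘ e) := by
  classical
  refine orthonormal_iff_ite.2 fun l l' => ?_
  have hne : (T.singularValues (e l) : 𝕜) ≠ 0 := RCLike.ofReal_ne_zero.2 (hpos l).ne'
  simp only [Function.comp_apply, leftSingularVector, inner_smul_left, inner_smul_right,
    inner_apply_rightSingularBasis, he.eq_iff]
  split_ifs with h
  · subst h
    simp only [map_inv₀, RCLike.conj_ofReal]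
    field_simp
  · simp only [mul_zero]

lemma apply_eq_sum_singularValues_smul (x : E) :
    T x = ∑ i : Fin (finrank 𝕜 E),
      (T.singularValues i : 𝕜) • inner 𝕜 (rightSingularBasis T i) x • leftSingularVector T i := by
  conv_lhs => rw [← (rightSingularBasis T).sum_repr' x]
  simp only [map_sum, map_smul, ← singularValues_smul_leftSingularVector]
  exact Finset.sum_congr rfl fun i _ => smul_comm _ _ _

lemma sum_castLE_finrank_range {M : Type*} [AddCommMonoid M] {r : ℕ}
    (hr : finrank 𝕜 T.range = r) {f : Fin (finrank 𝕜 E) → M}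
    (hf : ∀ i : Fin (finrank 𝕜 E), T.singularValues i = 0 → f i = 0) :
    ∑ l : Fin r, f (l.castLE (hr.ge.trans T.finrank_range_le)) = ∑ i, f i := by
  refine Fintype.sum_of_injective _ (Fin.castLE_injective _) _ _ (fun i hi => hf i ?_) fun _ => rfl
  by_contra h
  have hlt : (i : ℕ) < finrank 𝕜 T.range :=
    T.singularValues_pos_iff_lt_finrank_range.1 ((T.singularValues_pos_iff_ne_zero i).2 h)
  exact hi ⟨⟨i, hlt.trans_eq hr⟩, rfl⟩

theorem exists_orthonormal_apply_eq_sum_singularValues_smul {r : ℕ}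
    (hr : finrank 𝕜 T.range = r) :
    ∃ (u : Fin r → F) (v : Fin r → E), Orthonormal 𝕜 u ∧ Orthonormal 𝕜 v ∧
      ∀ x, T x = ∑ l : Fin r, (T.singularValues l : 𝕜) • inner 𝕜 (v l) x • u l := by
  let e : Fin r → Fin (finrank 𝕜 E) := Fin.castLE (hr.ge.trans T.finrank_range_le)
  have he : e.Injective := Fin.castLE_injective _
  have hpos (l : Fin r) : 0 < T.singularValues (e l) :=
    T.singularValues_pos_iff_lt_finrank_range.2 (l.isLt.trans_eq hr.symm)
  refine ⟨leftSingularVector T ∘ e, rightSingularBasis T ∘ e,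
    orthonormal_leftSingularVector_comp T he hpos,
    (rightSingularBasis T).orthonormal.comp e he, fun x => ?_⟩
  rw [apply_eq_sum_singularValues_smul, ← sum_castLE_finrank_range T hr]
  · rfl
  · intro i hi
    rw [hi, RCLike.ofReal_zero, zero_smul]

theorem sum_sq_norm_apply_eq_sum_sq_singularValues {ι : Type*} [Fintype ι]
    (b : OrthonormalBasis ι 𝕜 E) {r : ℕ} (hr : finrank 𝕜 T.range = r) :
    ∑ j, ‖T (b j)‖ ^ 2 = ∑ l : Fin r, T.singularValues l ^ 2 := by
  have htrace := T.isSymmetric_adjoint_comp_self.trace_eq_sum_eigenvalues rfl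
  simp only [LinearMap.trace_eq_sum_inner _ b, LinearMap.comp_apply,
    LinearMap.adjoint_inner_right, inner_self_eq_norm_sq_to_K, ← T.sq_singularValues_fin rfl]
    at htrace
  calc
    ∑ j, ‖T (b j)‖ ^ 2 = ∑ i : Fin (finrank 𝕜 E), T.singularValues i ^ 2 := by
      exact_mod_cast htrace
    _ = ∑ l : Fin r, T.singularValues l ^ 2 :=
      (sum_castLE_finrank_range T hr fun i hi => by rw [hi, zero_pow two_ne_zero]).symm

end SingularVectors

section Matrix

variable {𝕜 ι κ : Type*} [RCLike 𝕜] [Fintype κ]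

lemma finrank_range_toEuclideanLin [Finite ι] [DecidableEq κ] (c : Matrix ι κ 𝕜) :
    finrank 𝕜 (toEuclideanLin c).range = c.rank := by
  rw [c.rank_eq_finrank_range_toLin (PiLp.basisFun 2 𝕜 ι) (PiLp.basisFun 2 𝕜 κ),
    ← toLpLin_eq_toLin]

lemma toEuclideanLin_basisFun_apply [DecidableEq κ] (c : Matrix ι κ 𝕜) (i : ι) (j : κ) :
    toEuclideanLin c (EuclideanSpace.basisFun κ 𝕜 j) i = c i j := by
  simp [toLpLin_apply]

lemma orthonormal_euclideanSpace_iff {α : Type*} [DecidableEq α] {v : α → EuclideanSpace 𝕜 κ} :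
    Orthonormal 𝕜 v ↔
      ∀ l l', ∑ j, (starRingEnd 𝕜) (v l j) * v l' j = if l = l' then 1 else 0 := by
  simp only [orthonormal_iff_ite, PiLp.inner_apply, RCLike.inner_apply']

theorem stmt13_general [Fintype ι] (c : Matrix ι κ 𝕜) :
    ∃ (p : Fin c.rank → ℝ) (u : Fin c.rank → ι → 𝕜) (v : Fin c.rank → κ → 𝕜),
      (∀ l, 0 < p l) ∧ (∑ l, p l = ∑ i, ∑ j, ‖c i j‖ ^ 2) ∧
      (∀ l l', ∑ i, (starRingEnd 𝕜) (u l i) * u l' i = if l = l' then 1 else 0) ∧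
      (∀ l l', ∑ j, (starRingEnd 𝕜) (v l j) * v l' j = if l = l' then 1 else 0) ∧
      (∀ i j, c i j = ∑ l, ((Real.sqrt (p l) : ℝ) : 𝕜) * u l i * v l j) := by
  classical
  let T := toEuclideanLin c
  let b := EuclideanSpace.basisFun κ 𝕜
  have hr : finrank 𝕜 T.range = c.rank := finrank_range_toEuclideanLin c
  obtain ⟨u, v, hu, hv, hT⟩ := exists_orthonormal_apply_eq_sum_singularValues_smul T hr
  refine ⟨fun l => T.singularValues l ^ 2, fun l i => u l i, fun l j => (starRingEnd 𝕜) (v l j),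
    fun l => pow_pos (T.singularValues_pos_iff_lt_finrank_range.2 (l.isLt.trans_eq hr.symm)) 2, ?_,
    orthonormal_euclideanSpace_iff.1 hu, fun l l' => ?_, fun i j => ?_⟩
  · rw [← sum_sq_norm_apply_eq_sum_sq_singularValues T b hr, Finset.sum_comm]
    simp only [EuclideanSpace.norm_sq_eq, T, b, toEuclideanLin_basisFun_apply]
  · rw [← if_congr eq_comm rfl rfl, ← orthonormal_euclideanSpace_iff.1 hv l' l]
    simp only [RCLike.conj_conj, mul_comm]
  · rw [← toEuclideanLin_basisFun_apply c, hT]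
    simp only [WithLp.ofLp_sum, Finset.sum_apply, PiLp.smul_apply, smul_eq_mul,
      EuclideanSpace.basisFun_apply, EuclideanSpace.inner_single_right, one_mul,
      Real.sqrt_sq (T.singularValues_nonneg _)]
    exact Finset.sum_congr rfl fun l _ => by ring

end Matrix

/-- Schmidt decomposition: every coefficient matrix `c` of a normalized pure
bipartite state can be written as `c i j = Σ_l √(p_l) · u_l(i) · v_l(j)` with `k ≤ min n m`,
`p_l ≥ 0`, `Σ_l p_l = 1`, and orthonormal families `u`, `v`. -/
theorem stmt13 (n m : ℕ) (c : Matrix (Fin n) (Fin m) ℂ)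
    (hc : ∑ i, ∑ j, ‖c i j‖ ^ 2 = 1) :
    ∃ (k : ℕ), k ≤ min n m ∧
      ∃ (p : Fin k → ℝ) (u : Fin k → Fin n → ℂ) (v : Fin k → Fin m → ℂ),
        (∀ l, 0 ≤ p l) ∧ (∑ l, p l = 1) ∧
        (∀ l l' : Fin k, ∑ i, (starRingEnd ℂ) (u l i) * u l' i = if l = l' then 1 else 0) ∧
        (∀ l l' : Fin k, ∑ j, (starRingEnd ℂ) (v l j) * v l' j = if l = l' then 1 else 0) ∧
        (∀ i j, c i j = ∑ l, ((Real.sqrt (p l) : ℝ) : ℂ) * u l i * v l j) := by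
  obtain ⟨p, u, v, hp, hsum, hu, hv, hdecomp⟩ := stmt13_general c
  exact ⟨c.rank, le_min c.rank_le_height c.rank_le_width, p, u, v, fun l => (hp l).le,
    hsum.trans hc, hu, hv, hdecomp⟩
end

section
/- Wigner rotation for two perpendicular boosts: for all real v, w with |v| < 1 and |w| < 1, setting γ_v = 1/√(1−v²) and γ_w = 1/√(1−w²), there exists a real δ with cos δ = (γ_v + γ_w)/(1 + γ_v·γ_w) and a symmetric real 4×4 matrix B with Bᵀ·η·B = η and B₀₀ ≥ 1 (a pure boost) such that L_z(w)·L_x(v) = R_y(δ)·B, where R_y(δ) is the 4×4 matrix acting as the identity on the time coordinate and as the spatial rotation by angle δ about the y-axis, i.e. R_y(δ) has rows (1,0,0,0), (0, cos δ, 0, sin δ), (0,0,1,0), (0, −sin δ, 0, cos δ). -/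
open Matrix

noncomputable section

/-- The Minkowski metric matrix η = diag(1, −1, −1, −1). -/
def minkowski : Matrix (Fin 4) (Fin 4) ℝ := Matrix.diagonal ![1, -1, -1, -1]

/-- The relativistic γ-factor `γ(v) = 1/√(1−v²)`. -/
def gammaFac (v : ℝ) : ℝ := 1 / Real.sqrt (1 - v ^ 2)

/-- The Lorentz boost in the x-direction with velocity v. -/
def boostX (v : ℝ) : Matrix (Fin 4) (Fin 4) ℝ :=
  !![gammaFac v, -(gammaFac v * v), 0, 0;
     -(gammaFac v * v), gammaFac v, 0, 0;
     0, 0, 1, 0;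
     0, 0, 0, 1]

/-- The Lorentz boost in the z-direction with velocity w. -/
def boostZ (w : ℝ) : Matrix (Fin 4) (Fin 4) ℝ :=
  !![gammaFac w, 0, 0, -(gammaFac w * w);
     0, 1, 0, 0;
     0, 0, 1, 0;
     -(gammaFac w * w), 0, 0, gammaFac w]

/-- The spacetime rotation by angle δ about the y-axis. -/
def rotY (δ : ℝ) : Matrix (Fin 4) (Fin 4) ℝ :=
  !![1, 0, 0, 0;
     0, Real.cos δ, 0, Real.sin δ;
     0, 0, 1, 0;
     0, -Real.sin δ, 0, Real.cos δ]

/-! If a Lorentz matrix `Λ` is `R * B` with `R` fixing the time axis, then `B` has the same zeroth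
row `u` as `Λ`. Writing `x = u + e₀`, the pure boost with this row is `B = x xᵀ / (1 + u₀) - η`,
which is Lorentz because `xᵀ η x = 2 (1 + u₀)`, so that `R = Λ B⁻¹ = Λ η B η`. As
`Λ η x = Λ e₀ + e₀`, this is `R = ((Λ e₀ + e₀) xᵀ / (1 + Λ₀₀) - Λ) η`, from which the angle is
read off when `Λ` is a product of two perpendicular boosts. -/

theorem smul_vecMulVec_sub_mul_mul_self {n R : Type*} [Fintype n] [DecidableEq n] [CommRing R]
    {η : Matrix n n R} (hη : η * η = 1) {x : n → R} {c : R} (hx : c * (x ⬝ᵥ η *ᵥ x) = 2) :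
    (c • vecMulVec x x - η) * η * (c • vecMulVec x x - η) = η := by
  have hP : (c • vecMulVec x x) * η * (c • vecMulVec x x) = (2 : R) • c • vecMulVec x x := by
    rw [Matrix.mul_assoc, smul_mul_assoc, mul_smul_comm, mul_vecMulVec, mul_smul_comm,
      vecMulVec_mul_vecMulVec, vecMulVec_smul, ← hx, smul_smul, smul_smul, smul_smul]
    ring_nf
  calc (c • vecMulVec x x - η) * η * (c • vecMulVec x x - η)
      = (c • vecMulVec x x) * η * (c • vecMulVec x x) - (c • vecMulVec x x) * (η * η)
          - (η * η) * (c • vecMulVec x x) + η * η * η := by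
        generalize c • vecMulVec x x = P
        noncomm_ring
    _ = η := by rw [hP, hη, Matrix.mul_one, Matrix.one_mul, Matrix.one_mul, two_smul]; abel

theorem exists_cos_eq_and_sin_eq {c s : ℝ} (h : c ^ 2 + s ^ 2 = 1) :
    ∃ δ : ℝ, Real.cos δ = c ∧ Real.sin δ = s := by
  have hnorm : ‖(⟨c, s⟩ : ℂ)‖ = 1 := by
    rw [Complex.norm_def, Complex.normSq_mk, ← sq, ← sq, h, Real.sqrt_one]
  obtain ⟨δ, hδ⟩ := (Complex.norm_eq_one_iff _).1 hnorm
  refine ⟨δ, ?_, ?_⟩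
  · rw [← Complex.exp_ofReal_mul_I_re, hδ]
  · rw [← Complex.exp_ofReal_mul_I_im, hδ]

theorem minkowski_mul_self : minkowski * minkowski = 1 := by
  rw [minkowski, diagonal_mul_diagonal, ← diagonal_one]
  congr 1
  ext i
  fin_cases i <;> simp

theorem minkowski_transpose : minkowskiᵀ = minkowski := diagonal_transpose _

/-- The unit vector `e₀` along the time axis. -/
def timeAxis : Fin 4 → ℝ := Pi.single 0 1

theorem minkowski_mulVec_timeAxis : minkowski *ᵥ timeAxis = timeAxis := by
  simp [minkowski, timeAxis]

theorem mulVec_timeAxis (Λ : Matrix (Fin 4) (Fin 4) ℝ) : Λ *ᵥ timeAxis = Λ.col 0 :=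
  mulVec_single_one Λ 0

/-- The Lorentz condition `Λᵀ η Λ = η`, without restriction on orientation. -/
def IsLorentz (Λ : Matrix (Fin 4) (Fin 4) ℝ) : Prop := Λᵀ * minkowski * Λ = minkowski

namespace IsLorentz

variable {Λ M : Matrix (Fin 4) (Fin 4) ℝ}

theorem mul (hΛ : IsLorentz Λ) (hM : IsLorentz M) : IsLorentz (Λ * M) :=
  calc (Λ * M)ᵀ * minkowski * (Λ * M) = Mᵀ * (Λᵀ * minkowski * Λ) * M := by
        simp only [transpose_mul, Matrix.mul_assoc]
    _ = minkowski := by rw [hΛ, hM]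

theorem mul_minkowski_mul_transpose (hΛ : IsLorentz Λ) : Λ * minkowski * Λᵀ = minkowski := by
  have hleft : (minkowski * Λᵀ * minkowski) * Λ = 1 := by
    rw [Matrix.mul_assoc, Matrix.mul_assoc, ← Matrix.mul_assoc Λᵀ, hΛ, minkowski_mul_self]
  have hright : Λ * (minkowski * Λᵀ * minkowski) = 1 := mul_eq_one_comm.1 hleft
  calc Λ * minkowski * Λᵀ
      = Λ * (minkowski * Λᵀ * minkowski) * minkowski := by
        simp only [Matrix.mul_assoc, minkowski_mul_self, Matrix.mul_one]
    _ = minkowski := by rw [hright, Matrix.one_mul]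

theorem row_zero_dotProduct_minkowski_mulVec_row_zero (hΛ : IsLorentz Λ) :
    Λ.row 0 ⬝ᵥ minkowski *ᵥ Λ.row 0 = 1 :=
  calc Λ.row 0 ⬝ᵥ minkowski *ᵥ Λ.row 0 = (Λ * minkowski * Λᵀ) 0 0 := by
        rw [Matrix.mul_assoc]; rfl
    _ = 1 := by rw [hΛ.mul_minkowski_mul_transpose]; simp [minkowski]

end IsLorentz

/-- The pure boost whose zeroth row is the unit timelike vector `u`; in block form it is
`[[u₀, pᵀ], [p, 1 + p pᵀ / (1 + u₀)]]` for `u = (u₀, p)`. -/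
def pureBoost (u : Fin 4 → ℝ) : Matrix (Fin 4) (Fin 4) ℝ :=
  (1 + u 0)⁻¹ • vecMulVec (u + timeAxis) (u + timeAxis) - minkowski

theorem pureBoost_transpose (u : Fin 4 → ℝ) : (pureBoost u)ᵀ = pureBoost u := by
  simp only [pureBoost, transpose_sub, transpose_smul, transpose_vecMulVec, minkowski_transpose]

theorem pureBoost_zero_zero {u : Fin 4 → ℝ} (hu : 1 + u 0 ≠ 0) : pureBoost u 0 0 = u 0 := by
  have hentry : pureBoost u 0 0 = (1 + u 0)⁻¹ * ((u 0 + 1) * (u 0 + 1)) - 1 := by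
    simp [pureBoost, vecMulVec_apply, timeAxis, minkowski]
  rw [hentry]
  field_simp
  ring

theorem isLorentz_pureBoost {u : Fin 4 → ℝ} (hu : u ⬝ᵥ minkowski *ᵥ u = 1)
    (hu₀ : 1 + u 0 ≠ 0) : IsLorentz (pureBoost u) := by
  rw [IsLorentz, pureBoost_transpose]
  apply smul_vecMulVec_sub_mul_mul_self minkowski_mul_self
  have hx : (u + timeAxis) ⬝ᵥ minkowski *ᵥ (u + timeAxis) = 2 * (1 + u 0) := by
    have hcross : timeAxis ⬝ᵥ minkowski *ᵥ u = u 0 := by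
      simp [timeAxis, minkowski, mulVec_diagonal]
    rw [mulVec_add, minkowski_mulVec_timeAxis, dotProduct_add, add_dotProduct, add_dotProduct, hu,
      hcross, timeAxis, dotProduct_single_one, dotProduct_single_one, Pi.single_eq_same]
    ring
  rw [hx]
  field_simp

/-- The rotation factor `R = Λ B⁻¹` of a Lorentz matrix `Λ` that is left after splitting off the
pure boost `B` with the same zeroth row; the inverse is encoded as `B⁻¹ = η B η`. -/
def wignerRotation (Λ : Matrix (Fin 4) (Fin 4) ℝ) : Matrix (Fin 4) (Fin 4) ℝ :=
  Λ * minkowski * pureBoost (Λ.row 0) * minkowski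

theorem wignerRotation_mul_pureBoost {Λ : Matrix (Fin 4) (Fin 4) ℝ} (hΛ : IsLorentz Λ)
    (h₀ : 1 + Λ 0 0 ≠ 0) : wignerRotation Λ * pureBoost (Λ.row 0) = Λ := by
  have hB : pureBoost (Λ.row 0) * minkowski * pureBoost (Λ.row 0) = minkowski := by
    simpa only [IsLorentz, pureBoost_transpose] using
      isLorentz_pureBoost hΛ.row_zero_dotProduct_minkowski_mulVec_row_zero h₀
  calc wignerRotation Λ * pureBoost (Λ.row 0)
      = Λ * minkowski * (pureBoost (Λ.row 0) * minkowski * pureBoost (Λ.row 0)) := by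
        simp only [wignerRotation, Matrix.mul_assoc]
    _ = Λ := by rw [hB, Matrix.mul_assoc, minkowski_mul_self, Matrix.mul_one]

theorem wignerRotation_eq {Λ : Matrix (Fin 4) (Fin 4) ℝ} (hΛ : IsLorentz Λ) :
    wignerRotation Λ =
      ((1 + Λ 0 0)⁻¹ • vecMulVec (Λ.col 0 + timeAxis) (Λ.row 0 + timeAxis) - Λ) * minkowski := by
  have hrow : (Λ * minkowski) *ᵥ Λ.row 0 = timeAxis := by
    rw [← col_transpose, ← mulVec_timeAxis, mulVec_mulVec, hΛ.mul_minkowski_mul_transpose,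
      minkowski_mulVec_timeAxis]
  have hx : (Λ * minkowski) *ᵥ (Λ.row 0 + timeAxis) = Λ.col 0 + timeAxis := by
    rw [mulVec_add, hrow, ← mulVec_mulVec, minkowski_mulVec_timeAxis, mulVec_timeAxis, add_comm]
  rw [wignerRotation, pureBoost, mul_sub, mul_smul_comm, mul_vecMulVec, hx, Matrix.mul_assoc Λ,
    minkowski_mul_self, Matrix.mul_one]
  rfl

section Boosts

variable {v w : ℝ}

theorem one_le_gammaFac (hv : |v| < 1) : 1 ≤ gammaFac v := by
  have hpos : 0 < 1 - v ^ 2 := sub_pos.2 ((sq_lt_one_iff_abs_lt_one v).2 hv)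
  exact one_le_one_div (Real.sqrt_pos.2 hpos) (Real.sqrt_le_one.2 (sub_le_self 1 (sq_nonneg v)))

theorem gammaFac_sq_sub_sq (hv : |v| < 1) : gammaFac v ^ 2 - (gammaFac v * v) ^ 2 = 1 := by
  have hpos : 0 < 1 - v ^ 2 := sub_pos.2 ((sq_lt_one_iff_abs_lt_one v).2 hv)
  rw [gammaFac, mul_pow, div_pow, Real.sq_sqrt hpos.le]
  field_simp

theorem isLorentz_boostX (hv : |v| < 1) : IsLorentz (boostX v) := by
  set q := gammaFac v ^ 2 - (gammaFac v * v) ^ 2 with hq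
  have hdiag : (boostX v)ᵀ * minkowski * boostX v = diagonal ![q, -q, -1, -1] := by
    ext i j
    fin_cases i <;> fin_cases j <;>
      simp [boostX, minkowski, mul_apply, Fin.sum_univ_four, hq] <;> ring
  rw [IsLorentz, hdiag, hq, gammaFac_sq_sub_sq hv, minkowski]

theorem isLorentz_boostZ (hw : |w| < 1) : IsLorentz (boostZ w) := by
  set q := gammaFac w ^ 2 - (gammaFac w * w) ^ 2 with hq
  have hdiag : (boostZ w)ᵀ * minkowski * boostZ w = diagonal ![q, -1, -1, -q] := by
    ext i j
    fin_cases i <;> fin_cases j <;>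
      simp [boostZ, minkowski, mul_apply, Fin.sum_univ_four, hq] <;> ring
  rw [IsLorentz, hdiag, hq, gammaFac_sq_sub_sq hw, minkowski]

theorem boostZ_mul_boostX (v w : ℝ) :
    boostZ w * boostX v =
      !![gammaFac w * gammaFac v, -(gammaFac w * (gammaFac v * v)), 0, -(gammaFac w * w);
         -(gammaFac v * v), gammaFac v, 0, 0;
         0, 0, 1, 0;
         -(gammaFac w * w * gammaFac v), gammaFac w * w * (gammaFac v * v), 0, gammaFac w] := by
  ext i j
  fin_cases i <;> fin_cases j <;> simp [boostX, boostZ, mul_apply, Fin.sum_univ_four]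

theorem one_add_gammaFac_mul_gammaFac_ne_zero (hv : |v| < 1) (hw : |w| < 1) :
    1 + gammaFac v * gammaFac w ≠ 0 := by
  have := one_le_gammaFac hv
  have := one_le_gammaFac hw
  positivity

theorem wigner_cos_sq_add_sin_sq (hv : |v| < 1) (hw : |w| < 1) :
    ((gammaFac v + gammaFac w) / (1 + gammaFac v * gammaFac w)) ^ 2 +
      (-(gammaFac v * v * (gammaFac w * w)) / (1 + gammaFac v * gammaFac w)) ^ 2 = 1 := by
  have hγ := one_add_gammaFac_mul_gammaFac_ne_zero hv hw
  have hγv : (gammaFac v * v) ^ 2 = gammaFac v ^ 2 - 1 := by linarith [gammaFac_sq_sub_sq hv]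
  have hγw : (gammaFac w * w) ^ 2 = gammaFac w ^ 2 - 1 := by linarith [gammaFac_sq_sub_sq hw]
  rw [div_pow, div_pow, ← add_div, div_eq_one_iff_eq (pow_ne_zero 2 hγ), neg_sq, mul_pow, hγv, hγw]
  ring

theorem wignerRotation_boostZ_mul_boostX (hv : |v| < 1) (hw : |w| < 1) {δ : ℝ}
    (hcos : Real.cos δ = (gammaFac v + gammaFac w) / (1 + gammaFac v * gammaFac w))
    (hsin : Real.sin δ = -(gammaFac v * v * (gammaFac w * w)) / (1 + gammaFac v * gammaFac w)) :
    wignerRotation (boostZ w * boostX v) = rotY δ := by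
  have hvw := one_add_gammaFac_mul_gammaFac_ne_zero hv hw
  -- `field_simp` meets the denominator with its factors in either order.
  have hwv := one_add_gammaFac_mul_gammaFac_ne_zero hw hv
  have hxx : gammaFac v * (1 + gammaFac v * gammaFac w) - gammaFac w * (gammaFac v * v) ^ 2 =
      gammaFac v + gammaFac w := by linear_combination gammaFac w * gammaFac_sq_sub_sq hv
  have hzz : gammaFac w * (1 + gammaFac v * gammaFac w) - gammaFac v * (gammaFac w * w) ^ 2 =
      gammaFac v + gammaFac w := by linear_combination gammaFac v * gammaFac_sq_sub_sq hw
  rw [wignerRotation_eq ((isLorentz_boostZ hw).mul (isLorentz_boostX hv)), boostZ_mul_boostX]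
  ext i j
  rw [minkowski, mul_diagonal, Matrix.sub_apply, Matrix.smul_apply, vecMulVec_apply, rotY, hcos,
    hsin]
  fin_cases i <;> fin_cases j <;> simp [timeAxis] <;> field_simp <;> linarith

end Boosts

/-- Wigner rotation for two perpendicular boosts: for `|v| < 1`, `|w| < 1`
there are an angle δ with `cos δ = (γ_v + γ_w)/(1 + γ_v γ_w)` and a pure boost `B`
(symmetric Lorentz transformation with `B₀₀ ≥ 1`) such that `L_z(w)·L_x(v) = R_y(δ)·B`. -/
theorem stmt17 (v w : ℝ) (hv : |v| < 1) (hw : |w| < 1) :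
    ∃ (δ : ℝ) (B : Matrix (Fin 4) (Fin 4) ℝ),
      Real.cos δ = (gammaFac v + gammaFac w) / (1 + gammaFac v * gammaFac w) ∧
      Bᵀ = B ∧
      Bᵀ * minkowski * B = minkowski ∧
      1 ≤ B 0 0 ∧
      boostZ w * boostX v = rotY δ * B := by
  set Λ := boostZ w * boostX v with hΛdef
  have hΛ : IsLorentz Λ := (isLorentz_boostZ hw).mul (isLorentz_boostX hv)
  have hΛ₀₀ : 1 ≤ Λ 0 0 := by
    simpa [hΛdef, boostZ_mul_boostX] using
      one_le_mul_of_one_le_of_one_le (one_le_gammaFac hw) (one_le_gammaFac hv)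
  have hne : 1 + Λ 0 0 ≠ 0 := by positivity
  obtain ⟨δ, hcos, hsin⟩ := exists_cos_eq_and_sin_eq (wigner_cos_sq_add_sin_sq hv hw)
  refine ⟨δ, pureBoost (Λ.row 0), hcos, pureBoost_transpose _,
    isLorentz_pureBoost hΛ.row_zero_dotProduct_minkowski_mulVec_row_zero hne, ?_, ?_⟩
  · exact hΛ₀₀.trans_eq (pureBoost_zero_zero hne).symm
  · rw [← wignerRotation_boostZ_mul_boostX hv hw hcos hsin, wignerRotation_mul_pureBoost hΛ hne]
end
end
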